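/- Let Δ ≥ 41 be an integer and set k = ⌈27 Δ ln Δ⌉. Let G be a finite simple graph with maximum degree at most Δ and let Y be an independent set of vertices of G. Then the set of edges of G with exactly one endpoint in Y can be partitioned into k sets, each of which is G-good. -/

import Mathlib

open SimpleGraph

/-- Two distinct edges of `G` *conflict* if they are at distance exactly 1 in `G`
(they share no endpoint but some endpoint of one is adjacent to some endpoint of the
other), or they lie in a common triangle of `G`. -/
def EdgeConflict {V : Type*} (G : SimpleGraph V) (e₁ e₂ : Sym2 V) : Prop :=
  e₁ ≠ e₂ ∧
    (((∀ u ∈ e₁, u ∉ e₂) ∧ ∃ u ∈ e₁, ∃ v ∈ e₂, G.Adj u v) ∨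
      (∃ a b c : V, G.Adj a b ∧ G.Adj b c ∧ G.Adj a c ∧
        e₁ ∈ ({s(a, b), s(b, c), s(a, c)} : Set (Sym2 V)) ∧
        e₂ ∈ ({s(a, b), s(b, c), s(a, c)} : Set (Sym2 V))))

/-- An injective edge-coloring of `G` with `k` colors. -/
def IsInjEdgeColoring {V : Type*} (G : SimpleGraph V) {k : ℕ} (f : Sym2 V → Fin k) : Prop :=
  ∀ e₁ ∈ G.edgeSet, ∀ e₂ ∈ G.edgeSet, EdgeConflict G e₁ e₂ → f e₁ ≠ f e₂

/-- The injective chromatic index of `G`. -/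
noncomputable def injChromIndex {V : Type*} (G : SimpleGraph V) : ℕ :=
  sInf {k : ℕ | ∃ f : Sym2 V → Fin k, IsInjEdgeColoring G f}


/-- A set `F` of edges is `G`-good if no two (distinct) edges in `F` conflict. -/
def GGood {V : Type*} (G : SimpleGraph V) (F : Set (Sym2 V)) : Prop :=
  ∀ e₁ ∈ F, ∀ e₂ ∈ F, ¬ EdgeConflict G e₁ e₂

/-!
Let `X₁, …, Xₖ` be independent random vertex sets, each containing every vertex independently with
probability `1 / (2 Δ)`. Put an edge `xy` with `x ∉ Y` and `y ∈ Y` into class `i` when, among the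
at most `2 Δ` vertices adjacent to `x` or `y`, only `x` belongs to `Xᵢ`. Two edges of the same class
never conflict: an edge `uv` of `G` joining an endpoint of one to an endpoint of the other cannot
have both `u` and `v` in the independent set `Y`, so `u` or `v` lies in `Xᵢ` and is the endpoint
outside `Y` of both edges.

An edge misses all classes with probability at most `(1 - 1 / (2 e Δ)) ^ k ≤ exp (-k / (2 e Δ))`.
This event depends only on the vertices adjacent to `x` or `y`, and so is independent of all but
`2 Δ ^ 3` similar events. For `k ≥ 27 Δ ln Δ` the Lovász local lemma therefore puts any finite
number of edges into classes simultaneously, and compactness of the space of `k`-tuples of vertex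
sets extends this to all edges.
-/

open Finset MeasureTheory ProbabilityTheory
open scoped unitInterval

section LocalLemma

variable {Ω ι : Type*} [MeasurableSpace Ω] {μ : Measure Ω} [IsFiniteMeasure μ]
  {B : ι → Set Ω} {x : ι → ℝ} {N : ι → Finset ι}

theorem prod_one_sub_mul_measureReal_biInter_compl_le [DecidableEq ι] {S R : Finset ι}
    (hx : ∀ i ∈ R, x i ≤ 1) (hSR : Disjoint S R)
    (hB : ∀ i ∈ R, ∀ U ⊆ S ∪ R, i ∉ U →
      μ.real (B i ∩ ⋂ j ∈ U, (B j)ᶜ) ≤ x i * μ.real (⋂ j ∈ U, (B j)ᶜ)) :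
    (∏ i ∈ R, (1 - x i)) * μ.real (⋂ j ∈ S, (B j)ᶜ) ≤ μ.real (⋂ j ∈ S ∪ R, (B j)ᶜ) := by
  induction R using Finset.induction_on with
  | empty => simp
  | insert i R hiR ih =>
    obtain ⟨hiS, hSR⟩ := disjoint_insert_right.1 hSR
    have hsub : S ∪ R ⊆ S ∪ insert i R := union_subset_union_right (subset_insert i R)
    have hprod := ih (fun j hj => hx j (mem_insert_of_mem hj)) hSR
      fun j hj U hU => hB j (mem_insert_of_mem hj) U (hU.trans hsub)
    have hi := hB i (mem_insert_self i R) (S ∪ R) hsub (by simp [hiS, hiR])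
    have hsplit : μ.real (⋂ j ∈ S ∪ R, (B j)ᶜ) ≤
        μ.real (B i ∩ ⋂ j ∈ S ∪ R, (B j)ᶜ) + μ.real (⋂ j ∈ S ∪ insert i R, (B j)ᶜ) := by
      rw [union_insert, set_biInter_insert, Set.inter_comm (B i), Set.inter_comm (B i)ᶜ]
      exact (measureReal_mono (Set.inter_union_compl _ (B i)).ge).trans (measureReal_union_le _ _)
    calc (∏ j ∈ insert i R, (1 - x j)) * μ.real (⋂ j ∈ S, (B j)ᶜ)
        = (1 - x i) * ((∏ j ∈ R, (1 - x j)) * μ.real (⋂ j ∈ S, (B j)ᶜ)) := by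
          rw [prod_insert hiR, mul_assoc]
      _ ≤ (1 - x i) * μ.real (⋂ j ∈ S ∪ R, (B j)ᶜ) :=
          mul_le_mul_of_nonneg_left hprod (sub_nonneg.2 (hx i (mem_insert_self i R)))
      _ ≤ μ.real (⋂ j ∈ S ∪ insert i R, (B j)ᶜ) := by linarith

theorem measureReal_inter_biInter_compl_le (hx : ∀ i, x i ∈ Set.Icc 0 1)
    (hB : ∀ i T, i ∉ T → Disjoint T (N i) →
      μ.real (B i ∩ ⋂ j ∈ T, (B j)ᶜ) ≤
        x i * (∏ j ∈ N i, (1 - x j)) * μ.real (⋂ j ∈ T, (B j)ᶜ))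
    {i : ι} {T : Finset ι} (hiT : i ∉ T) :
    μ.real (B i ∩ ⋂ j ∈ T, (B j)ᶜ) ≤ x i * μ.real (⋂ j ∈ T, (B j)ᶜ) := by
  classical
  induction T using Finset.strongInduction generalizing i with
  | H T ih =>
    have hnear : (∏ j ∈ T ∩ N i, (1 - x j)) * μ.real (⋂ j ∈ T \ N i, (B j)ᶜ) ≤
        μ.real (⋂ j ∈ T, (B j)ᶜ) := by
      simpa only [sdiff_union_inter] using prod_one_sub_mul_measureReal_biInter_compl_le
        (fun j _ => (hx j).2) (disjoint_sdiff_inter T (N i)) fun j hj U hU hjU =>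
          ih U ((hU.trans_eq (sdiff_union_inter T (N i))).ssubset_of_mem_notMem
            (mem_inter.1 hj).1 hjU) hjU
    calc μ.real (B i ∩ ⋂ j ∈ T, (B j)ᶜ)
        ≤ μ.real (B i ∩ ⋂ j ∈ T \ N i, (B j)ᶜ) :=
          measureReal_mono (Set.inter_subset_inter_right _
            (Set.biInter_subset_biInter_left fun _ hj => sdiff_subset hj))
      _ ≤ x i * (∏ j ∈ N i, (1 - x j)) * μ.real (⋂ j ∈ T \ N i, (B j)ᶜ) :=
          hB i _ (fun hi => hiT (sdiff_subset hi)) sdiff_disjoint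
      _ ≤ x i * (∏ j ∈ T ∩ N i, (1 - x j)) * μ.real (⋂ j ∈ T \ N i, (B j)ᶜ) := by
          refine mul_le_mul_of_nonneg_right (mul_le_mul_of_nonneg_left ?_ (hx i).1)
            measureReal_nonneg
          exact prod_le_prod_of_subset_of_le_one inter_subset_right
            (fun j _ => sub_nonneg.2 (hx j).2) fun j _ _ => sub_le_self _ (hx j).1
      _ ≤ x i * μ.real (⋂ j ∈ T, (B j)ᶜ) := by
          rw [mul_assoc]
          exact mul_le_mul_of_nonneg_left hnear (hx i).1

theorem lovasz_local_lemma (hx : ∀ i, x i ∈ Set.Icc 0 1)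
    (hB : ∀ i T, i ∉ T → Disjoint T (N i) →
      μ.real (B i ∩ ⋂ j ∈ T, (B j)ᶜ) ≤
        x i * (∏ j ∈ N i, (1 - x j)) * μ.real (⋂ j ∈ T, (B j)ᶜ)) (T : Finset ι) :
    (∏ i ∈ T, (1 - x i)) * μ.real Set.univ ≤ μ.real (⋂ i ∈ T, (B i)ᶜ) := by
  classical
  simpa using prod_one_sub_mul_measureReal_biInter_compl_le (S := ∅) (R := T)
    (fun i _ => (hx i).2) (disjoint_empty_left T) fun _ _ _ _ hi =>
      measureReal_inter_biInter_compl_le hx hB hi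

theorem exp_neg_one_le_one_sub_inv_pow (n : ℕ) :
    Real.exp (-1) ≤ (1 - (n : ℝ)⁻¹) ^ (n - 1) := by
  rcases n with _ | _ | n
  · simp
  · simp
  · have hinv : 1 - ((n + 1 + 1 : ℕ) : ℝ)⁻¹ = (1 + ((n + 1 : ℕ) : ℝ)⁻¹)⁻¹ := by
      push_cast
      field_simp
      ring
    rw [Real.exp_neg, hinv, inv_pow]
    exact inv_anti₀ (by positivity) Real.one_add_inv_pow_le_exp

theorem exists_mem_Ico_le_mul_one_sub_pow {d : ℕ} {q : ℝ}
    (hq : Real.exp 1 * (d + 1) * q ≤ 1) : ∃ y ∈ Set.Ico (0 : ℝ) 1, q ≤ y * (1 - y) ^ d := by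
  have hq' : q ≤ Real.exp (-1) * ((d : ℝ) + 1)⁻¹ := by
    rw [Real.exp_neg, ← mul_inv, ← one_div, le_div_iff₀' (by positivity)]
    exact hq
  rcases d.eq_zero_or_pos with rfl | hd
  · exact ⟨Real.exp (-1), ⟨(Real.exp_pos _).le, by simp⟩, by simpa using hq'⟩
  · refine ⟨((d + 1 : ℕ) : ℝ)⁻¹,
      ⟨by positivity, inv_lt_one_of_one_lt₀ (by exact_mod_cast Nat.lt_add_of_pos_left hd)⟩, ?_⟩
    calc q ≤ ((d + 1 : ℕ) : ℝ)⁻¹ * Real.exp (-1) := by simpa [mul_comm] using hq'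
      _ ≤ ((d + 1 : ℕ) : ℝ)⁻¹ * (1 - ((d + 1 : ℕ) : ℝ)⁻¹) ^ d := by
        gcongr
        exact exp_neg_one_le_one_sub_inv_pow (d + 1)

theorem lovasz_local_lemma_symmetric [NeZero μ] {d : ℕ} {q : ℝ} (hN : ∀ i, #(N i) ≤ d)
    (hB : ∀ i T, i ∉ T → Disjoint T (N i) →
      μ.real (B i ∩ ⋂ j ∈ T, (B j)ᶜ) ≤ q * μ.real (⋂ j ∈ T, (B j)ᶜ))
    (hq : Real.exp 1 * (d + 1) * q ≤ 1) (T : Finset ι) :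
    (⋂ i ∈ T, (B i)ᶜ).Nonempty := by
  obtain ⟨y, ⟨hy0, hy1⟩, hqy⟩ := exists_mem_Ico_le_mul_one_sub_pow hq
  have hpow (i : ι) : (1 - y) ^ d ≤ ∏ _j ∈ N i, (1 - y) := by
    rw [prod_const]
    exact pow_le_pow_of_le_one (sub_nonneg.2 hy1.le) (sub_le_self _ hy0) (hN i)
  have hlower := lovasz_local_lemma (μ := μ) (x := fun _ => y) (fun _ => ⟨hy0, hy1.le⟩)
    (fun i T hiT hT => (hB i T hiT hT).trans <| by
      gcongr
      exact hqy.trans (mul_le_mul_of_nonneg_left (hpow i) hy0)) T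
  have hpos : 0 < (∏ _i ∈ T, (1 - y)) * μ.real Set.univ :=
    mul_pos (prod_pos fun _ _ => sub_pos.2 hy1) measureReal_univ_pos
  exact nonempty_of_measureReal_ne_zero (hpos.trans_le hlower).ne'

end LocalLemma

section Independence

variable {ι J : Type*} {α : ι → Type*}

theorem dependsOn_mem_biInter_compl {E : J → Set (∀ i, α i)} {S : J → Set ι}
    (hE : ∀ j, DependsOn (· ∈ E j) (S j)) (t : Finset J) :
    DependsOn (· ∈ ⋂ j ∈ t, (E j)ᶜ) (⋃ j ∈ t, S j) := by
  intro ω ω' h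
  simp only [Set.mem_iInter, Set.mem_compl_iff, eq_iff_iff]
  refine forall₂_congr fun j hj => ?_
  rw [← eq_iff_iff, not_iff_not.2 (hE j fun i hi => h i (Set.mem_biUnion hj hi)).to_iff]

variable [∀ i, MeasurableSpace (α i)]

theorem exists_measurableSet_preimage_restrict_eq {P : Set (∀ i, α i)} {S : Finset ι}
    (hP : MeasurableSet P) (hPS : DependsOn (· ∈ P) S) :
    ∃ A : Set (∀ i : S, α i), MeasurableSet A ∧ S.restrict ⁻¹' A = P := by
  classical
  rcases P.eq_empty_or_nonempty with rfl | ⟨a, -⟩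
  · exact ⟨∅, .empty, Set.preimage_empty⟩
  · refine ⟨Function.updateFinset a S ⁻¹' P, measurable_updateFinset hP, ?_⟩
    ext ω
    exact (hPS fun i hi => by simp [Function.updateFinset, mem_coe.1 hi]).to_iff

variable {μ : ∀ i, Measure (α i)} [∀ i, IsProbabilityMeasure (μ i)]

theorem infinitePi_inter_of_dependsOn {P Q : Set (∀ i, α i)} {S T : Finset ι}
    (hP : MeasurableSet P) (hQ : MeasurableSet Q) (hPS : DependsOn (· ∈ P) S)
    (hQT : DependsOn (· ∈ Q) T) (hST : Disjoint S T) :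
    Measure.infinitePi μ (P ∩ Q) = Measure.infinitePi μ P * Measure.infinitePi μ Q := by
  obtain ⟨A, hA, rfl⟩ := exists_measurableSet_preimage_restrict_eq hP hPS
  obtain ⟨A', hA', rfl⟩ := exists_measurableSet_preimage_restrict_eq hQ hQT
  exact ((iIndepFun_infinitePi fun _ => measurable_id).indepFun_finset S T hST
    measurable_pi_apply).measure_inter_preimage_eq_mul A A' hA hA'

theorem infinitePi_biInter_compl_of_dependsOn {E : J → Set (∀ i, α i)} {S : J → Finset ι}
    (hE : ∀ j, MeasurableSet (E j)) (hES : ∀ j, DependsOn (· ∈ E j) (S j))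
    (hS : Pairwise (Function.onFun Disjoint S)) (t : Finset J) :
    Measure.infinitePi μ (⋂ j ∈ t, (E j)ᶜ) = ∏ j ∈ t, Measure.infinitePi μ (E j)ᶜ := by
  classical
  induction t using Finset.induction_on with
  | empty => simp
  | insert j t hj ih =>
    rw [set_biInter_insert, prod_insert hj, ← ih]
    refine infinitePi_inter_of_dependsOn (S := S j) (T := t.biUnion S) (hE j).compl
      (t.measurableSet_biInter fun i _ => (hE i).compl) ?_ ?_ ?_
    · simpa using dependsOn_mem_biInter_compl hES {j}
    · simpa using dependsOn_mem_biInter_compl hES t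
    · exact (disjoint_biUnion_right _ _ _).2 fun i hi => hS (ne_of_mem_of_not_mem hi hj).symm

end Independence

section Isolation

variable {V κ : Type*}

/-- A point of `κ × V → Bool` encodes a family of vertex sets indexed by `κ`. The event
`isolationEvent W x i` says that, when `x ∈ W`, the `i`-th of these sets meets `W` exactly
in `x`. -/
def isolationEvent (W : Finset V) (x : V) (i : κ) : Set (κ × V → Bool) :=
  {ω | ∀ z ∈ W, ω (i, z) = true ↔ z = x}

theorem dependsOn_mem_isolationEvent (W : Finset V) (x : V) (i : κ) :
    DependsOn (· ∈ isolationEvent W x i) ({i} ×ˢ W : Finset (κ × V)) := by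
  intro ω ω' h
  refine propext (forall₂_congr fun z hz => ?_)
  rw [h (i, z) (by simpa using hz)]

theorem isolationEvent_eq_pi [DecidableEq V] (W : Finset V) (x : V) (i : κ) :
    isolationEvent W x i =
      (({i} ×ˢ W : Finset (κ × V)) : Set (κ × V)).pi fun v => {decide (v.2 = x)} := by
  have hdecide (ω : κ × V → Bool) (z : V) :
      ω (i, z) = decide (z = x) ↔ (ω (i, z) = true ↔ z = x) := by
    rw [Bool.eq_iff_iff, decide_eq_true_iff]
  ext ω
  simp [isolationEvent, hdecide]

theorem measurableSet_isolationEvent (W : Finset V) (x : V) (i : κ) :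
    MeasurableSet (isolationEvent W x i) := by
  classical
  rw [isolationEvent_eq_pi]
  exact .pi (Finset.countable_toSet _) fun _ _ => .singleton _

theorem isClosed_isolationEvent (W : Finset V) (x : V) (i : κ) :
    IsClosed (isolationEvent W x i) := by
  classical
  rw [isolationEvent_eq_pi]
  exact isClosed_set_pi fun _ _ => isClosed_discrete _

theorem infinitePi_real_isolationEvent {W : Finset V} {x : V} (hx : x ∈ W) (p : I) (i : κ) :
    (Measure.infinitePi fun _ : κ × V => Ber(true, false, p)).real (isolationEvent W x i) =
      p * (1 - p) ^ (#W - 1) := by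
  classical
  have hfactor (z : V) : Ber(true, false, p).real {decide (z = x)} =
      if z = x then (p : ℝ) else 1 - p := by
    split_ifs with h <;> simp [h]
  rw [isolationEvent_eq_pi, measureReal_def, Measure.infinitePi_pi _ fun _ _ => .singleton _,
    ENNReal.toReal_prod, prod_product, prod_singleton]
  simp only [← measureReal_def, hfactor]
  rw [← mul_prod_erase W _ hx, if_pos rfl,
    prod_congr rfl fun z hz => if_neg (ne_of_mem_erase hz), prod_const, card_erase_of_mem hx]

theorem dependsOn_mem_iInter_isolationEvent_compl [Fintype κ] (W : Finset V) (x : V) :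
    DependsOn (· ∈ ⋂ i : κ, (isolationEvent W x i)ᶜ) (univ ×ˢ W : Finset (κ × V)) := by
  have h := dependsOn_mem_biInter_compl (dependsOn_mem_isolationEvent (κ := κ) W x) univ
  simp only [mem_univ, Set.iInter_true, Set.iUnion_true] at h
  refine h.mono (Set.iUnion_subset fun i => ?_)
  exact coe_subset.2 (product_subset_product_left (subset_univ {i}))

theorem infinitePi_real_iInter_isolationEvent_compl_le [Fintype κ] {W : Finset V} {x : V}
    (hx : x ∈ W) {n : ℕ} (hW : #W ≤ n) (p : I) :
    (Measure.infinitePi fun _ : κ × V => Ber(true, false, p)).real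
      (⋂ i : κ, (isolationEvent W x i)ᶜ) ≤
        Real.exp (-(Fintype.card κ * (p * (1 - p) ^ (n - 1)))) := by
  have hS : Pairwise (Function.onFun Disjoint fun i : κ => ({i} ×ˢ W : Finset (κ × V))) :=
    fun i j hij => disjoint_product.2 (.inl (disjoint_singleton.2 hij))
  have hprod := infinitePi_biInter_compl_of_dependsOn
    (μ := fun _ : κ × V => Ber(true, false, p)) (measurableSet_isolationEvent W x)
    (dependsOn_mem_isolationEvent W x) hS univ
  have hlayer (i : κ) : (Measure.infinitePi fun _ : κ × V => Ber(true, false, p)).real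
      (isolationEvent W x i)ᶜ ≤ Real.exp (-(p * (1 - p) ^ (n - 1))) := by
    rw [probReal_compl_eq_one_sub (measurableSet_isolationEvent W x i),
      infinitePi_real_isolationEvent hx]
    have hpow : (p : ℝ) * (1 - p) ^ (n - 1) ≤ p * (1 - p) ^ (#W - 1) :=
      mul_le_mul_of_nonneg_left (pow_le_pow_of_le_one (sub_nonneg.2 p.2.2)
        (sub_le_self _ p.2.1) (Nat.sub_le_sub_right hW 1)) p.2.1
    linarith [Real.one_sub_le_exp_neg (p * (1 - p : ℝ) ^ (n - 1))]
  simp only [mem_univ, Set.iInter_true] at hprod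
  rw [measureReal_def, hprod, ENNReal.toReal_prod, ← mul_neg, Real.exp_nat_mul]
  exact (prod_le_prod (fun _ _ => measureReal_nonneg) fun i _ => hlayer i).trans_eq (prod_const _)

variable {ι : Type*} [Fintype κ] {W : ι → Finset V} {x : ι → V} {n d : ℕ}

theorem nonempty_biInter_iUnion_isolationEvent (hx : ∀ e, x e ∈ W e) (hW : ∀ e, #(W e) ≤ n)
    (hd : ∀ e, {f | ¬ Disjoint (W e) (W f)}.encard ≤ d)
    (hnd : Real.exp 1 * (d + 1) * Real.exp (-(Fintype.card κ / (Real.exp 1 * n))) ≤ 1)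
    (T : Finset ι) :
    (⋂ e ∈ T, ⋃ i : κ, isolationEvent (W e) (x e) i).Nonempty := by
  classical
  let p : I := ⟨(n : ℝ)⁻¹, by positivity, Nat.cast_inv_le_one n⟩
  let μ := Measure.infinitePi fun _ : κ × V => Ber(true, false, p)
  let B (e : ι) : Set (κ × V → Bool) := ⋂ i, (isolationEvent (W e) (x e) i)ᶜ
  have hB_meas (e : ι) : MeasurableSet (B e) :=
    .iInter fun i => (measurableSet_isolationEvent _ _ i).compl
  have hB_dep (e : ι) : DependsOn (· ∈ B e) ((univ ×ˢ W e : Finset (κ × V)) : Set (κ × V)) :=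
    dependsOn_mem_iInter_isolationEvent_compl (W e) (x e)
  have hB_le (e : ι) : μ.real (B e) ≤ Real.exp (-(Fintype.card κ / (Real.exp 1 * n))) := by
    refine (infinitePi_real_iInter_isolationEvent_compl_le (hx e) (hW e) p).trans
      (Real.exp_le_exp.2 (neg_le_neg ?_))
    rw [div_eq_mul_inv, mul_inv_rev, ← Real.exp_neg]
    gcongr
    exact exp_neg_one_le_one_sub_inv_pow n
  have hfin (e : ι) : {f | ¬ Disjoint (W e) (W f)}.Finite := Set.finite_of_encard_le_coe (hd e)
  have hne := lovasz_local_lemma_symmetric (μ := μ) (B := B) (N := fun e => (hfin e).toFinset)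
    (fun e => by simpa [(hfin e).encard_eq_coe_toFinset_card] using hd e) (fun e T _ hT => ?_)
    hnd T
  · simpa only [B, Set.compl_iInter, compl_compl] using hne
  · have hdisj : Disjoint (univ ×ˢ W e : Finset (κ × V)) (T.biUnion fun f => univ ×ˢ W f) := by
      refine (disjoint_biUnion_right _ _ _).2 fun f hf => disjoint_product.2 (.inr ?_)
      simpa using disjoint_left.1 hT hf
    have hmul := infinitePi_inter_of_dependsOn (μ := fun _ : κ × V => Ber(true, false, p))
      (hB_meas e) (T.measurableSet_biInter fun f _ => (hB_meas f).compl) (hB_dep e)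
      (by simpa using dependsOn_mem_biInter_compl hB_dep T) hdisj
    rw [measureReal_def, hmul, ENNReal.toReal_mul]
    exact mul_le_mul_of_nonneg_right (hB_le e) measureReal_nonneg

theorem exists_forall_exists_inter_eq_singleton (hx : ∀ e, x e ∈ W e) (hW : ∀ e, #(W e) ≤ n)
    (hd : ∀ e, {f | ¬ Disjoint (W e) (W f)}.encard ≤ d)
    (hnd : Real.exp 1 * (d + 1) * Real.exp (-(Fintype.card κ / (Real.exp 1 * n))) ≤ 1) :
    ∃ X : κ → Set V, ∀ e, ∃ i, X i ∩ W e = {x e} := by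
  obtain ⟨ω, -, hω⟩ := isCompact_univ.inter_iInter_nonempty
    (fun e => ⋃ i : κ, isolationEvent (W e) (x e) i)
    (fun e => isClosed_iUnion_of_finite (isClosed_isolationEvent (W e) (x e)))
    (by simpa using nonempty_biInter_iUnion_isolationEvent hx hW hd hnd)
  refine ⟨fun i => {z | ω (i, z) = true}, fun e => ?_⟩
  obtain ⟨i, hi⟩ := Set.mem_iUnion.1 (Set.mem_iInter.1 hω e)
  refine ⟨i, Set.ext fun z => ⟨fun ⟨hz, hzW⟩ => (hi z hzW).1 hz, ?_⟩⟩
  rintro rfl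
  exact ⟨(hi _ (hx e)).2 rfl, hx e⟩

end Isolation

section Numeric

theorem six_mul_cube_le_rpow {x : ℝ} (hx : 3 ≤ x) : 6 * x ^ 3 ≤ x ^ (14 / 3 : ℝ) := by
  have hx0 : 0 < x := by linarith
  have hsix : 6 ≤ x ^ (5 / 3 : ℝ) := by
    refine le_of_pow_le_pow_left₀ three_ne_zero (by positivity) ?_
    calc (6 : ℝ) ^ 3 ≤ 3 ^ 5 := by norm_num
      _ ≤ x ^ 5 := by gcongr
      _ = (x ^ (5 / 3 : ℝ)) ^ 3 := by
        rw [← Real.rpow_natCast, ← Real.rpow_natCast, ← Real.rpow_mul hx0.le]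
        norm_num
  calc 6 * x ^ 3 ≤ x ^ (5 / 3 : ℝ) * x ^ 3 := by gcongr
    _ = x ^ (14 / 3 : ℝ) := by
      rw [← Real.rpow_natCast, ← Real.rpow_add hx0]
      norm_num

theorem exp_one_mul_cube_mul_exp_neg_le_one {x k : ℝ} (hx : 3 ≤ x) (hk : 27 * x * Real.log x ≤ k) :
    Real.exp 1 * (2 * x ^ 3 + 1) * Real.exp (-(k / (Real.exp 1 * (2 * x)))) ≤ 1 := by
  have hx0 : 0 < x := by linarith
  have hlog : 0 ≤ Real.log x := Real.log_nonneg (by linarith)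
  have he : Real.exp 1 < 2.72 := Real.exp_one_lt_d9.trans (by norm_num)
  have hexponent : Real.log x * (14 / 3) ≤ k / (Real.exp 1 * (2 * x)) := by
    rw [le_div_iff₀ (by positivity)]
    calc Real.log x * (14 / 3) * (Real.exp 1 * (2 * x))
        = x * Real.log x * (28 / 3 * Real.exp 1) := by ring
      _ ≤ x * Real.log x * 27 := by
        gcongr
        linarith
      _ ≤ k := by linarith
  have hcube : Real.exp 1 * (2 * x ^ 3 + 1) ≤ 6 * x ^ 3 := by
    have : (3 : ℝ) ^ 3 ≤ x ^ 3 := by gcongr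
    calc Real.exp 1 * (2 * x ^ 3 + 1) ≤ 2.72 * (2 * x ^ 3 + 1) := by gcongr
      _ ≤ 6 * x ^ 3 := by linarith
  rw [Real.exp_neg, mul_inv_le_iff₀ (Real.exp_pos _), one_mul]
  calc Real.exp 1 * (2 * x ^ 3 + 1) ≤ x ^ (14 / 3 : ℝ) := hcube.trans (six_mul_cube_le_rpow hx)
    _ = Real.exp (Real.log x * (14 / 3)) := Real.rpow_def_of_pos hx0 _
    _ ≤ Real.exp (k / (Real.exp 1 * (2 * x))) := Real.exp_le_exp.2 hexponent

end Numeric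

section CutEdges

variable {V : Type*} {G : SimpleGraph V} {X Y : Set V}

theorem GGood.mono {F F' : Set (Sym2 V)} (hF : GGood G F) (h : F' ⊆ F) : GGood G F' :=
  fun e₁ h₁ e₂ h₂ => hF e₁ (h h₁) e₂ (h h₂)

theorem exists_adj_of_mem_triangle {a b c : V} (hab : G.Adj a b) (hbc : G.Adj b c)
    (hac : G.Adj a c) {e₁ e₂ : Sym2 V} (he : e₁ ≠ e₂)
    (h₁ : e₁ ∈ ({s(a, b), s(b, c), s(a, c)} : Set (Sym2 V)))
    (h₂ : e₂ ∈ ({s(a, b), s(b, c), s(a, c)} : Set (Sym2 V))) :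
    ∃ p q r, e₁ = s(p, q) ∧ e₂ = s(p, r) ∧ G.Adj p q ∧ G.Adj p r ∧ G.Adj q r := by
  rcases h₁ with rfl | rfl | rfl <;> rcases h₂ with rfl | rfl | rfl
  · exact absurd rfl he
  · exact ⟨b, a, c, Sym2.eq_swap, rfl, hab.symm, hbc, hac⟩
  · exact ⟨a, b, c, rfl, rfl, hab, hac, hbc⟩
  · exact ⟨b, c, a, rfl, Sym2.eq_swap, hbc, hab.symm, hac.symm⟩
  · exact absurd rfl he
  · exact ⟨c, b, a, Sym2.eq_swap, Sym2.eq_swap, hbc.symm, hac.symm, hab.symm⟩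
  · exact ⟨a, c, b, rfl, rfl, hac, hab, hbc.symm⟩
  · exact ⟨c, a, b, Sym2.eq_swap, Sym2.eq_swap, hac.symm, hbc.symm, hab⟩
  · exact absurd rfl he

variable (G Y) in
/-- The edge cut of `Y`: the edges of `G` with exactly one endpoint in `Y`. -/
def cutEdges : Set (Sym2 V) :=
  {e | e ∈ G.edgeSet ∧ ∃ x y : V, e = s(x, y) ∧ y ∈ Y ∧ x ∉ Y}

theorem mem_of_mem_cutEdges_of_ne {e : Sym2 V} (he : e ∈ cutEdges G Y) {x u : V} (hx : x ∈ e)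
    (hxY : x ∉ Y) (hu : u ∈ e) (hux : u ≠ x) : u ∈ Y := by
  obtain ⟨-, x', y', rfl, hy', -⟩ := he
  grind

section LocallyFinite

variable [DecidableEq V] [G.LocallyFinite] {Δ : ℕ}

variable (G) in
/-- The vertices of `G` adjacent to an endpoint of `e`. The endpoints themselves are among them
when `e` is an edge of `G`. -/
def edgeNeighborFinset (e : Sym2 V) : Finset V :=
  e.toFinset.biUnion fun v => G.neighborFinset v

theorem mem_edgeNeighborFinset {e : Sym2 V} {z : V} :
    z ∈ edgeNeighborFinset G e ↔ ∃ v ∈ e, G.Adj v z := by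
  simp [edgeNeighborFinset]

theorem mem_edgeNeighborFinset_of_mem_edgeSet {e : Sym2 V} (he : e ∈ G.edgeSet) {z : V}
    (hz : z ∈ e) : z ∈ edgeNeighborFinset G e := by
  obtain ⟨v, rfl⟩ := hz
  exact mem_edgeNeighborFinset.2 ⟨v, Sym2.mem_mk_right z v, (G.mem_edgeSet.1 he).symm⟩

theorem card_edgeNeighborFinset_le (hdeg : ∀ v, G.degree v ≤ Δ) (e : Sym2 V) :
    #(edgeNeighborFinset G e) ≤ 2 * Δ :=
  (card_biUnion_le_card_mul _ _ _ fun v _ => hdeg v).trans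
    (Nat.mul_le_mul_right Δ (by rw [Sym2.card_toFinset]; split_ifs <;> norm_num))

theorem encard_not_disjoint_edgeNeighborFinset_le (hdeg : ∀ v, G.degree v ≤ Δ) (e : Sym2 V) :
    {f ∈ G.edgeSet | ¬ Disjoint (edgeNeighborFinset G e) (edgeNeighborFinset G f)}.encard ≤
      (2 * Δ ^ 3 : ℕ) := by
  let N := (edgeNeighborFinset G e).biUnion fun z => (G.neighborFinset z).biUnion fun v =>
    G.incidenceFinset v
  have hsub : {f ∈ G.edgeSet | ¬ Disjoint (edgeNeighborFinset G e) (edgeNeighborFinset G f)} ⊆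
      N := by
    rintro f ⟨hf, hdisj⟩
    obtain ⟨z, hze, hzf⟩ := not_disjoint_iff.1 hdisj
    obtain ⟨v, hvf, hvz⟩ := mem_edgeNeighborFinset.1 hzf
    simp only [N, mem_coe, mem_biUnion, mem_neighborFinset, mem_incidenceFinset]
    exact ⟨z, hze, v, hvz.symm, hf, hvf⟩
  have hcard : #N ≤ 2 * Δ * (Δ * Δ) := by
    refine (card_biUnion_le_card_mul _ _ (Δ * Δ) fun z _ => ?_).trans
      (Nat.mul_le_mul_right _ (card_edgeNeighborFinset_le hdeg e))
    refine (card_biUnion_le_card_mul _ _ Δ fun v _ => ?_).trans (Nat.mul_le_mul_right Δ (hdeg z))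
    exact (G.card_incidenceFinset_eq_degree v).trans_le (hdeg v)
  calc _ ≤ (N : Set (Sym2 V)).encard := Set.encard_mono hsub
    _ = #N := Set.encard_coe_eq_coe_finsetCard N
    _ ≤ (2 * Δ ^ 3 : ℕ) := by
      rw [show 2 * Δ ^ 3 = 2 * Δ * (Δ * Δ) by ring]
      exact_mod_cast hcard

variable (G X Y) in
/-- The vertex set `X` isolates the edge `e` of the cut of `Y` at its endpoint `x` outside `Y`:
among the vertices adjacent to an endpoint of `e`, only `x` belongs to `X`. -/
structure Isolates (e : Sym2 V) (x : V) : Prop where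
  mem_cutEdges : e ∈ cutEdges G Y
  mem : x ∈ e
  notMem : x ∉ Y
  inter_eq : X ∩ edgeNeighborFinset G e = {x}

theorem Isolates.eq_of_adj {e : Sym2 V} {x v z : V} (h : Isolates G X Y e x) (hz : z ∈ X)
    (hv : v ∈ e) (hvz : G.Adj v z) : z = x :=
  h.inter_eq.subset ⟨hz, mem_coe.2 (mem_edgeNeighborFinset.2 ⟨v, hv, hvz⟩)⟩

theorem Isolates.mem_set {e : Sym2 V} {x : V} (h : Isolates G X Y e x) : x ∈ X :=
  (h.inter_eq.superset rfl).1

theorem Isolates.mem_of_ne {e : Sym2 V} {x u : V} (h : Isolates G X Y e x) (hu : u ∈ e)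
    (hux : u ≠ x) : u ∈ Y :=
  mem_of_mem_cutEdges_of_ne h.mem_cutEdges h.mem h.notMem hu hux

theorem Isolates.eq_and_eq_or_eq_of_adj (hY : ∀ u ∈ Y, ∀ v ∈ Y, ¬ G.Adj u v) {e₁ e₂ : Sym2 V}
    {x₁ x₂ u v : V} (h₁ : Isolates G X Y e₁ x₁) (h₂ : Isolates G X Y e₂ x₂) (hu : u ∈ e₁)
    (hv : v ∈ e₂) (huv : G.Adj u v) : x₁ = x₂ ∧ (u = x₁ ∨ v = x₁) := by
  by_cases hux : u = x₁
  · subst hux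
    exact ⟨h₂.eq_of_adj h₁.mem_set hv huv.symm, .inl rfl⟩
  by_cases hvx : v = x₂
  · subst hvx
    have hvx₁ := h₁.eq_of_adj h₂.mem_set hu huv
    exact ⟨hvx₁.symm, .inr hvx₁⟩
  exact absurd huv (hY u (h₁.mem_of_ne hu hux) v (h₂.mem_of_ne hv hvx))

theorem gGood_setOf_isolates (hY : ∀ u ∈ Y, ∀ v ∈ Y, ¬ G.Adj u v) (X : Set V) :
    GGood G {e | ∃ x, Isolates G X Y e x} := by
  rintro e₁ ⟨x₁, h₁⟩ e₂ ⟨x₂, h₂⟩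
    ⟨hne, ⟨hdisj, u, hu, v, hv, huv⟩ | ⟨a, b, c, hab, hbc, hac, he₁, he₂⟩⟩
  · obtain ⟨rfl, -⟩ := h₁.eq_and_eq_or_eq_of_adj hY h₂ hu hv huv
    exact hdisj x₁ h₁.mem h₂.mem
  · obtain ⟨p, q, r, rfl, rfl, hpq, hpr, hqr⟩ := exists_adj_of_mem_triangle hab hbc hac hne he₁ he₂
    obtain ⟨rfl, rfl | rfl⟩ := h₁.eq_and_eq_or_eq_of_adj hY h₂ (Sym2.mem_mk_right p q)
      (Sym2.mem_mk_right p r) hqr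
    · rcases Sym2.mem_iff.1 h₂.mem with h | h
      exacts [hpq.ne' h, hqr.ne h]
    · rcases Sym2.mem_iff.1 h₁.mem with h | h
      exacts [hpr.ne' h, hqr.ne' h]

theorem exists_forall_exists_isolates (hdeg : ∀ v, G.degree v ≤ Δ) (Y : Set V) {k : ℕ}
    (hk : Real.exp 1 * (2 * Δ ^ 3 + 1) * Real.exp (-(k / (Real.exp 1 * (2 * Δ)))) ≤ 1) :
    ∃ X : Fin k → Set V, ∀ e ∈ cutEdges G Y, ∃ i x, Isolates G (X i) Y e x := by
  have hend (e : cutEdges G Y) : ∃ x ∈ (e : Sym2 V), x ∉ Y := by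
    obtain ⟨_, -, x, y, rfl, -, hx⟩ := e
    exact ⟨x, Sym2.mem_mk_left x y, hx⟩
  choose x hxe hxY using hend
  obtain ⟨X, hX⟩ := exists_forall_exists_inter_eq_singleton (κ := Fin k) (x := x)
    (W := fun e : cutEdges G Y => edgeNeighborFinset G e) (n := 2 * Δ) (d := 2 * Δ ^ 3)
    (fun e => mem_edgeNeighborFinset_of_mem_edgeSet e.2.1 (hxe e))
    (fun e => card_edgeNeighborFinset_le hdeg e)
    (fun e => by
      rw [← Subtype.val_injective.encard_image]
      refine (Set.encard_mono ?_).trans (encard_not_disjoint_edgeNeighborFinset_le hdeg e)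
      rintro _ ⟨f, hf, rfl⟩
      exact ⟨f.2.1, hf⟩)
    (by simpa using hk)
  refine ⟨X, fun e he => ?_⟩
  obtain ⟨i, hi⟩ := hX ⟨e, he⟩
  exact ⟨i, x ⟨e, he⟩, he, hxe _, hxY _, hi⟩

end LocallyFinite

end CutEdges

theorem partition_into_good_sets_general {V : Type*} (G : SimpleGraph V) [G.LocallyFinite]
    (Δ : ℕ) (hΔ : 3 ≤ Δ) (hdeg : ∀ v : V, G.degree v ≤ Δ)
    (Y : Set V) (hY : ∀ u ∈ Y, ∀ v ∈ Y, ¬ G.Adj u v) :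
    ∃ P : Fin (⌈(27 : ℝ) * Δ * Real.log Δ⌉₊) → Set (Sym2 V),
      (∀ i, GGood G (P i)) ∧
      (∀ i j, i ≠ j → Disjoint (P i) (P j)) ∧
      (⋃ i, P i) = {e | e ∈ G.edgeSet ∧ ∃ x y : V, e = s(x, y) ∧ y ∈ Y ∧ x ∉ Y} := by
  classical
  obtain ⟨X, hX⟩ := exists_forall_exists_isolates hdeg Y
    (exp_one_mul_cube_mul_exp_neg_le_one (by exact_mod_cast hΔ) (Nat.le_ceil _))
  let F : Fin _ → Set (Sym2 V) := fun i => {e | ∃ x, Isolates G (X i) Y e x}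
  have hF : ⋃ i, F i = cutEdges G Y := Set.Subset.antisymm
    (Set.iUnion_subset fun _ _ ⟨_, h⟩ => h.mem_cutEdges) fun e he => Set.mem_iUnion.2 (hX e he)
  exact ⟨disjointed F, fun i => (gGood_setOf_isolates hY (X i)).mono (disjointed_subset F i),
    fun i j hij => disjoint_disjointed F hij, iUnion_disjointed.trans hF⟩

/-- Theorem 8: for `Δ ≥ 41` and `k = ⌈27 Δ ln Δ⌉`, if `G` has maximum degree at most `Δ`
and `Y` is an independent set, then the edges of `G` with exactly one endpoint in `Y`
can be partitioned into `k` `G`-good sets. -/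
theorem partition_into_good_sets {V : Type*} [Fintype V] (G : SimpleGraph V)
    [DecidableRel G.Adj] (Δ : ℕ) (hΔ : 41 ≤ Δ) (hdeg : ∀ v : V, G.degree v ≤ Δ)
    (Y : Set V) (hY : ∀ u ∈ Y, ∀ v ∈ Y, ¬ G.Adj u v) :
    ∃ P : Fin (⌈(27 : ℝ) * Δ * Real.log Δ⌉₊) → Set (Sym2 V),
      (∀ i, GGood G (P i)) ∧
      (∀ i j, i ≠ j → Disjoint (P i) (P j)) ∧
      (⋃ i, P i) = {e | e ∈ G.edgeSet ∧ ∃ x y : V, e = s(x, y) ∧ y ∈ Y ∧ x ∉ Y} :=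
  partition_into_good_sets_general G Δ (by lia) hdeg Y hY
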